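/- Let L be a modular ortholattice and c₀ ≤ c₃ with c₁, c₂ ∈ [c₀, c₃]. Define d₁ = ((c₁ ∧ c₂)' ∧ c₁) ∨ c₀ (the relative orthocomplement of c₁ ∧ c₂ in [c₀, c₁]) and e = ((c₁ ∨ c₂)' ∧ c₃) ∨ d₁ (the relative orthocomplement of c₁ ∨ c₂ in [d₁, c₃]). Then e is a complement of c₂ in the interval [c₀, c₃], i.e., e ∧ c₂ = c₀ and e ∨ c₂ = c₃; moreover, if c₁ is itself a complement of c₂ in [c₀, c₃], then e = c₁. -/

import Mathlib

/-- An ortholattice: a bounded lattice with an order-reversing involution `x ↦ x′`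
satisfying `x ⊓ x′ = ⊥` and `x ⊔ x′ = ⊤`. -/
class Ortholattice (α : Type*) extends Lattice α, BoundedOrder α where
  compl : α → α
  compl_antitone : ∀ x y : α, x ≤ y → compl y ≤ compl x
  compl_compl : ∀ x : α, compl (compl x) = x
  inf_compl : ∀ x : α, x ⊓ compl x = ⊥
  sup_compl : ∀ x : α, x ⊔ compl x = ⊤

postfix:max "′" => Ortholattice.compl

/-!
Complements in an interval can be assembled in two steps: if `d` is a complement of `c ⊓ x` in
`[a, c]` and `e` is a complement of `c ⊔ x` in `[d, b]`, then `e` is a complement of `x` in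
`[a, b]`. This holds in every lattice; modularity serves only to cut a complement of `x` in the
whole lattice down to one in an interval around `x`.
-/

/-- `IsRelCompl a b x y` means that `x` and `y` are relative complements in the interval `[a, b]`.
It is stated for elements of the ambient lattice instead of as `IsCompl` in the subtype
`Set.Icc a b`; the two equations already place `x` and `y` in the interval. -/
structure IsRelCompl {α : Type*} [Lattice α] (a b x y : α) : Prop where
  inf_eq : x ⊓ y = a
  sup_eq : x ⊔ y = b

namespace IsRelCompl

section Lattice

variable {α : Type*} [Lattice α] {a b c d e x y : α}

theorem symm (h : IsRelCompl a b x y) : IsRelCompl a b y x :=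
  ⟨inf_comm y x ▸ h.inf_eq, sup_comm y x ▸ h.sup_eq⟩

theorem le_left (h : IsRelCompl a b x y) : a ≤ x :=
  h.inf_eq.ge.trans inf_le_left

theorem le_right (h : IsRelCompl a b x y) : a ≤ y :=
  h.symm.le_left

theorem right_le (h : IsRelCompl a b x y) : y ≤ b :=
  le_sup_right.trans h.sup_eq.le

theorem eq_upper_of_left_eq_lower (h : IsRelCompl a b a y) : y = b :=
  (sup_eq_right.2 h.le_right).symm.trans h.sup_eq

theorem eq_lower_of_left_eq_upper (h : IsRelCompl a b b y) : y = a :=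
  (inf_eq_right.2 h.right_le).symm.trans h.inf_eq

theorem of_inf_of_sup (hd : IsRelCompl a c (c ⊓ x) d) (he : IsRelCompl d b (c ⊔ x) e) :
    IsRelCompl a b x e where
  inf_eq := by
    have inf_le_d : x ⊓ e ≤ d := (inf_le_inf_right e le_sup_right).trans he.inf_eq.le
    have inf_le_c : x ⊓ e ≤ c := inf_le_d.trans hd.right_le
    apply le_antisymm
    · exact (le_inf (le_inf inf_le_c inf_le_left) inf_le_d).trans hd.inf_eq.le
    · exact le_inf (hd.le_left.trans inf_le_right) (hd.le_right.trans he.le_right)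
  sup_eq := calc
    x ⊔ e = x ⊔ (c ⊓ x ⊔ d) ⊔ e := by
      rw [← sup_assoc x, sup_eq_left.2 (inf_le_right : c ⊓ x ≤ x), sup_assoc,
        sup_eq_right.2 he.le_right]
    _ = c ⊔ x ⊔ e := by rw [hd.sup_eq, sup_comm x]
    _ = b := he.sup_eq

theorem eq_of_inf_of_sup (hd : IsRelCompl a c (c ⊓ x) d) (he : IsRelCompl d b (c ⊔ x) e)
    (h : IsRelCompl a b c x) : e = c := by
  rw [h.inf_eq] at hd
  rw [h.sup_eq] at he
  exact he.eq_lower_of_left_eq_upper.trans hd.eq_upper_of_left_eq_lower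

end Lattice

theorem restrict {α : Type*} [Lattice α] [IsModularLattice α] {a a' b b' x y : α}
    (h : IsRelCompl a b x y) (haa' : a ≤ a') (hax : a' ≤ x) (hxb : x ≤ b') (hbb' : b' ≤ b) :
    IsRelCompl a' b' x (y ⊓ b' ⊔ a') where
  inf_eq := calc
    x ⊓ (y ⊓ b' ⊔ a') = x ⊓ y ⊓ b' ⊔ a' := by rw [← inf_sup_assoc_of_le _ hax, inf_assoc]
    _ = a' := by rw [h.inf_eq, sup_eq_right.2 (inf_le_left.trans haa')]
  sup_eq := calc
    x ⊔ (y ⊓ b' ⊔ a') = (x ⊔ y) ⊓ b' := by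
      rw [sup_left_comm, sup_eq_left.2 hax, sup_comm, ← sup_inf_assoc_of_le _ hxb]
    _ = b' := by rw [h.sup_eq, inf_eq_right.2 hbb']

theorem of_isCompl {α : Type*} [Lattice α] [BoundedOrder α] {x y : α} (h : IsCompl x y) :
    IsRelCompl ⊥ ⊤ x y :=
  ⟨h.inf_eq_bot, h.sup_eq_top⟩

end IsRelCompl

theorem Ortholattice.isCompl_compl {α : Type*} [Ortholattice α] (x : α) : IsCompl x x′ :=
  .of_eq (inf_compl x) (sup_compl x)

theorem stmt7_general {α : Type*} [Lattice α] [BoundedOrder α] [IsModularLattice α]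
    {c₀ c₁ c₂ c₃ p q d₁ e : α} (hp : IsCompl (c₁ ⊓ c₂) p) (hq : IsCompl (c₁ ⊔ c₂) q)
    (h01 : c₀ ≤ c₁) (h13 : c₁ ≤ c₃) (h02 : c₀ ≤ c₂) (h23 : c₂ ≤ c₃)
    (hd₁ : d₁ = (p ⊓ c₁) ⊔ c₀) (he : e = (q ⊓ c₃) ⊔ d₁) :
    (c₀ ≤ e ∧ e ≤ c₃) ∧ e ⊓ c₂ = c₀ ∧ e ⊔ c₂ = c₃ ∧
    (c₁ ⊓ c₂ = c₀ → c₁ ⊔ c₂ = c₃ → e = c₁) := by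
  have hd₁_compl : IsRelCompl c₀ c₁ (c₁ ⊓ c₂) d₁ :=
    hd₁ ▸ (IsRelCompl.of_isCompl hp).restrict bot_le (le_inf h01 h02) inf_le_left le_top
  have he_compl : IsRelCompl d₁ c₃ (c₁ ⊔ c₂) e :=
    he ▸ (IsRelCompl.of_isCompl hq).restrict bot_le (hd₁_compl.right_le.trans le_sup_left)
      (sup_le h13 h23) le_top
  have h : IsRelCompl c₀ c₃ c₂ e := hd₁_compl.of_inf_of_sup he_compl
  exact ⟨⟨h.le_right, h.right_le⟩, h.symm.inf_eq, h.symm.sup_eq,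
    fun hinf hsup ↦ hd₁_compl.eq_of_inf_of_sup he_compl ⟨hinf, hsup⟩⟩

/-- Let `L` be a modular ortholattice, `c₀ ≤ c₃`, and `c₁, c₂ ∈ [c₀, c₃]`.  With
`d₁ = ((c₁ ⊓ c₂)′ ⊓ c₁) ⊔ c₀` (the relative orthocomplement of `c₁ ⊓ c₂` in `[c₀, c₁]`)
and `e = ((c₁ ⊔ c₂)′ ⊓ c₃) ⊔ d₁` (the relative orthocomplement of `c₁ ⊔ c₂` in `[d₁, c₃]`),
`e` is a complement of `c₂` in `[c₀, c₃]`; moreover if `c₁` is itself a complement of `c₂`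
in `[c₀, c₃]` then `e = c₁`. -/
theorem stmt7 {α : Type*} [Ortholattice α] [IsModularLattice α]
    (c₀ c₁ c₂ c₃ : α) (h03 : c₀ ≤ c₃)
    (h01 : c₀ ≤ c₁) (h13 : c₁ ≤ c₃) (h02 : c₀ ≤ c₂) (h23 : c₂ ≤ c₃)
    (d₁ e : α)
    (hd₁ : d₁ = ((c₁ ⊓ c₂)′ ⊓ c₁) ⊔ c₀)
    (he : e = ((c₁ ⊔ c₂)′ ⊓ c₃) ⊔ d₁) :
    (c₀ ≤ e ∧ e ≤ c₃) ∧ e ⊓ c₂ = c₀ ∧ e ⊔ c₂ = c₃ ∧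
    (c₁ ⊓ c₂ = c₀ → c₁ ⊔ c₂ = c₃ → e = c₁) :=
  stmt7_general (Ortholattice.isCompl_compl _) (Ortholattice.isCompl_compl _) h01 h13 h02 h23 hd₁ he
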